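/- In any 2-crossed module (L →δ H →∂ G, ▷, {·,·}_p), for all h₁, h₂, h₃ ∈ H one has {h₁, h₂h₃}_p⁻¹ = ((∂(h₁) ▷ h₂) ▷' {h₁, h₃}_p⁻¹) · {h₁, h₂}_p⁻¹. -/

import Mathlib

/-- A 2-crossed module `(L --δ--> H --∂--> G, ▷, Peiffer lifting)`:
groups `G H L`, homomorphisms `δ : L → H` (field `δ`) and `∂ : H → G` (field `bd`)
with `∂ ∘ δ = 1`, left actions `▷` of `G` on `H` and `L` by automorphisms
(fields `actH`, `actL`; `G` acts on itself by conjugation), and the Peiffer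
lifting `{·,·}_p : H × H → L` (field `pf`), subject to the usual axioms. -/
structure TwoCrossedModule (G H L : Type*) [Group G] [Group H] [Group L] where
  δ : L →* H
  bd : H →* G
  actH : G →* MulAut H
  actL : G →* MulAut L
  pf : H → H → L
  comp_eq_one : ∀ l : L, bd (δ l) = 1
  -- (i) g ▷ ∂(h) = ∂(g ▷ h), where G acts on itself by conjugation
  act_bd : ∀ (g : G) (h : H), g * bd h * g⁻¹ = bd (actH g h)
  -- (i) g ▷ δ(l) = δ(g ▷ l)
  act_δ : ∀ (g : G) (l : L), actH g (δ l) = δ (actL g l)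
  -- (ii) g ▷ {h₁,h₂}_p = {g ▷ h₁, g ▷ h₂}_p
  act_pf : ∀ (g : G) (h₁ h₂ : H), actL g (pf h₁ h₂) = pf (actH g h₁) (actH g h₂)
  -- (iii) δ({h₁,h₂}_p) = h₁h₂h₁⁻¹·(∂(h₁) ▷ h₂⁻¹)
  δ_pf : ∀ h₁ h₂ : H, δ (pf h₁ h₂) = h₁ * h₂ * h₁⁻¹ * actH (bd h₁) h₂⁻¹
  -- (iv) {δ(l₁), δ(l₂)}_p = l₁l₂l₁⁻¹l₂⁻¹
  pf_δ_δ : ∀ l₁ l₂ : L, pf (δ l₁) (δ l₂) = l₁ * l₂ * l₁⁻¹ * l₂⁻¹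
  -- (v) {h₁h₂, h₃}_p = {h₁, h₂h₃h₂⁻¹}_p · (∂(h₁) ▷ {h₂,h₃}_p)
  pf_mul_left : ∀ h₁ h₂ h₃ : H,
    pf (h₁ * h₂) h₃ = pf h₁ (h₂ * h₃ * h₂⁻¹) * actL (bd h₁) (pf h₂ h₃)
  -- (vi) {h₁, h₂h₃}_p = {h₁,h₂}_p · {h₁,h₃}_p · {⟨h₁,h₃⟩_p⁻¹, ∂(h₁) ▷ h₂}_p,
  -- where ⟨h₁,h₃⟩_p = h₁h₃h₁⁻¹·(∂(h₁) ▷ h₃⁻¹) is the Peiffer commutator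
  pf_mul_right : ∀ h₁ h₂ h₃ : H,
    pf h₁ (h₂ * h₃) = pf h₁ h₂ * pf h₁ h₃ *
      pf (h₁ * h₃ * h₁⁻¹ * actH (bd h₁) h₃⁻¹)⁻¹ (actH (bd h₁) h₂)
  -- (vii) {δ(l), h}_p · {h, δ(l)}_p = l·(∂(h) ▷ l⁻¹)
  pf_δ : ∀ (h : H) (l : L), pf (δ l) h * pf h (δ l) = l * actL (bd h) l⁻¹

namespace TwoCrossedModule

variable {G H L : Type*} [Group G] [Group H] [Group L]

/-- The map `▷' : H × L → L`, defined by `h ▷' l = l · {δ(l)⁻¹, h}_p`. -/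
def act' (X : TwoCrossedModule G H L) (h : H) (l : L) : L :=
  l * X.pf (X.δ l)⁻¹ h

end TwoCrossedModule

/-!
The multiplication axiom (vi) says `{h₁, h₂h₃}_p = {h₁, h₂}_p · ((∂(h₁) ▷ h₂) ▷' {h₁, h₃}_p)`, so
the theorem amounts to `▷'` commuting with inversion in `L`. Axiom (vii) rewrites `(h ▷' l)⁻¹` as
`{h, δ(l⁻¹)}_p · (∂(h) ▷ l⁻¹)`, and `l ↦ {h, δ(l)}_p · (∂(h) ▷ l)` is multiplicative because `δ(l)`
acts on `L` through `▷'` as conjugation by `l`. Hence `h ▷' ·` is this endomorphism of `L`.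
-/

namespace TwoCrossedModule

variable {G H L : Type*} [Group G] [Group H] [Group L] (X : TwoCrossedModule G H L)

theorem pf_mul_eq_mul_act' (h₁ h₂ h₃ : H) :
    X.pf h₁ (h₂ * h₃) = X.pf h₁ h₂ * X.act' (X.actH (X.bd h₁) h₂) (X.pf h₁ h₃) := by
  rw [act', pf_mul_right, δ_pf, mul_assoc]

theorem act'_δ (l m : L) : X.act' (X.δ l) m = l * m * l⁻¹ := by
  rw [act', ← map_inv, pf_δ_δ]
  group

theorem pf_δ_mul (h : H) (l m : L) :
    X.pf h (X.δ (l * m)) =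
      X.pf h (X.δ l) * (X.actL (X.bd h) l * X.pf h (X.δ m) * (X.actL (X.bd h) l)⁻¹) := by
  rw [map_mul, pf_mul_eq_mul_act', act_δ, act'_δ]

/-- The endomorphism `h ▷' ·` of `L`, given by the formula `l ↦ {h, δ(l)}_p · (∂(h) ▷ l)`, for which
multiplicativity can be read off the axioms; `act'_eq_act'Hom` shows that it agrees with `act'`. -/
def act'Hom (h : H) : L →* L :=
  MonoidHom.mk' (fun l ↦ X.pf h (X.δ l) * X.actL (X.bd h) l) fun l m ↦ by
    rw [pf_δ_mul, map_mul]
    group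

theorem act'Hom_apply (h : H) (l : L) :
    X.act'Hom h l = X.pf h (X.δ l) * X.actL (X.bd h) l :=
  rfl

theorem act'_mul_act'Hom_inv (h : H) (l : L) : X.act' h l * X.act'Hom h l⁻¹ = 1 :=
  calc
    X.act' h l * X.act'Hom h l⁻¹
      = l * (X.pf (X.δ l⁻¹) h * X.pf h (X.δ l⁻¹)) * X.actL (X.bd h) l⁻¹ := by
        rw [act', act'Hom_apply, ← map_inv X.δ]
        group
    _ = 1 := by
        rw [pf_δ, inv_inv, map_inv]
        group

theorem act'_eq_act'Hom (h : H) (l : L) : X.act' h l = X.act'Hom h l := by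
  simpa only [map_inv, mul_inv_eq_one] using X.act'_mul_act'Hom_inv h l

theorem act'_inv (h : H) (l : L) : X.act' h l⁻¹ = (X.act' h l)⁻¹ := by
  simp only [act'_eq_act'Hom, map_inv]

end TwoCrossedModule

/-- In any 2-crossed module,
`{h₁, h₂h₃}_p⁻¹ = ((∂(h₁) ▷ h₂) ▷' {h₁, h₃}_p⁻¹) · {h₁, h₂}_p⁻¹`. -/
theorem pf_mul_inv {G H L : Type*} [Group G] [Group H] [Group L]
    (X : TwoCrossedModule G H L) (h₁ h₂ h₃ : H) :
    (X.pf h₁ (h₂ * h₃))⁻¹ =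
      X.act' (X.actH (X.bd h₁) h₂) (X.pf h₁ h₃)⁻¹ * (X.pf h₁ h₂)⁻¹ := by
  rw [X.pf_mul_eq_mul_act', mul_inv_rev, X.act'_inv]
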